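/- arXiv:2601.08359 — 2 statements merged into one kernel-verified Lean document; each statement's English description precedes it below -/
import Mathlib

section
/- With W, δ, e, N, M and W_δ as in the context: (1) Player I has a winning strategy in the binary Gale–Stewart game with target set W_δ if and only if Player I has a winning strategy in the binary Gale–Stewart game with target set W; (2) Player II has a winning strategy in the game with target set W_δ if and only if Player II has a winning strategy in the game with target set W. -/
open Metric Set Filter MeasureTheory

noncomputable local instance : MetricSpace (ℕ → Bool) := PiNat.metricSpace

/-- The finite prefix `⟨x 0, …, x (n-1)⟩` of a play. -/
def prefixList (x : ℕ → Bool) (n : ℕ) : List Bool := List.ofFn fun i : Fin n => x i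

/-- `x` is a play consistent with the Player I pure strategy `sI`. -/
def ConsistentI (sI : List Bool → Bool) (x : ℕ → Bool) : Prop :=
  ∀ n : ℕ, Even n → x n = sI (prefixList x n)

/-- `x` is a play consistent with the Player II pure strategy `sII`. -/
def ConsistentII (sII : List Bool → Bool) (x : ℕ → Bool) : Prop :=
  ∀ n : ℕ, Odd n → x n = sII (prefixList x n)

/- A strategy for the game on `W` is carried over to the game on `W_δ` by following it along the
positions `e 0 < e 1 < …` and playing `false` elsewhere. Conversely, a strategy for `W_δ` is used in
the game on `W` by simulation: the opponent's bit at `k` is entered at position `e k`, the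
opponent's remaining bits are set to `false`, and the strategy's own bit at `e k` is copied back.
Since `e` is increasing, each simulated bit depends only on bits already played; since the idle
positions carry `false`, the constraint in `W_δ` is met whenever Player I fills them. -/

/-- Consistency of the play `x` with the strategy `s` of a player who moves exactly at the positions
satisfying `P`. The two players of the Gale–Stewart game are the cases `P = Even` and `P = Odd`, for
which this unfolds to `ConsistentI` and `ConsistentII`. -/
def ConsistentOn (P : ℕ → Prop) (s : List Bool → Bool) (x : ℕ → Bool) : Prop :=
  ∀ n, P n → x n = s (prefixList x n)

/-- Existence of a strategy for the player moving at the positions satisfying `P` that forces the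
play into `V`. Player II wins outside the target set, so for that player `V` is the complement
of the target. -/
def HasWinningStrategy (P : ℕ → Prop) (V : Set (ℕ → Bool)) : Prop :=
  ∃ s : List Bool → Bool, ∀ x, ConsistentOn P s x → x ∈ V

theorem length_prefixList (x : ℕ → Bool) (n : ℕ) : (prefixList x n).length = n :=
  List.length_ofFn

theorem getD_prefixList (x : ℕ → Bool) {n i : ℕ} (hi : i < n) :
    (prefixList x n).getD i false = x i := by
  simp [prefixList, List.getD_eq_getElem?_getD, hi]

theorem prefixList_congr {x y : ℕ → Bool} {n : ℕ} (h : EqOn x y (Iio n)) :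
    prefixList x n = prefixList y n :=
  congrArg List.ofFn (funext fun i => h i.2)

theorem eqOn_extend_Iio {α β γ : Type*} [LinearOrder α] [Preorder β] {e : α → β}
    (he : StrictMono e) {a : α} {y z : α → γ} (h : EqOn y z (Iio a)) (d : β → γ) :
    EqOn (Function.extend e y d) (Function.extend e z d) (Iio (e a)) := by
  intro b hb
  by_cases hbe : ∃ c, e c = b
  · obtain ⟨c, rfl⟩ := hbe
    rw [he.injective.extend_apply, he.injective.extend_apply]
    exact h (he.lt_iff_lt.mp hb)
  · rw [Function.extend_apply' _ _ _ hbe, Function.extend_apply' _ _ _ hbe]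

section Strategies

variable {P : ℕ → Prop}

theorem exists_strategy_consistentOn_iff {F : (ℕ → Bool) → ℕ → Bool}
    (hF : ∀ n, P n → ∀ x y, EqOn x y (Iio n) → F x n = F y n) :
    ∃ s : List Bool → Bool, ∀ x, ConsistentOn P s x ↔ ∀ n, P n → x n = F x n := by
  refine ⟨fun l => F (fun i => l.getD i false) l.length, fun x => forall₂_congr fun n hn => ?_⟩
  beta_reduce
  rw [length_prefixList, hF n hn _ x fun i hi => getD_prefixList x hi]

open Classical in
/-- The play in which the player moving at the positions satisfying `P` follows `s`, while the
opponent plays the bits of `z` at all other positions. The prefix is written as `List.ofFn`, not as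
`prefixList`, to keep the bound on `i` visible to the termination check. -/
noncomputable def playAgainst (P : ℕ → Prop) (s : List Bool → Bool) (z : ℕ → Bool) (n : ℕ) : Bool :=
  if P n then s (List.ofFn fun i : Fin n => playAgainst P s z i) else z n
termination_by n
decreasing_by exact i.2

theorem consistentOn_playAgainst (s : List Bool → Bool) (z : ℕ → Bool) :
    ConsistentOn P s (playAgainst P s z) := by
  intro n hn
  rw [playAgainst, if_pos hn, prefixList]

theorem playAgainst_of_not (s : List Bool → Bool) (z : ℕ → Bool) {n : ℕ} (hn : ¬P n) :
    playAgainst P s z n = z n := by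
  rw [playAgainst, if_neg hn]

theorem playAgainst_congr (s : List Bool → Bool) {z z' : ℕ → Bool} {m : ℕ}
    (h : ∀ n ≤ m, ¬P n → z n = z' n) : playAgainst P s z m = playAgainst P s z' m := by
  induction m using Nat.strong_induction_on with
  | _ m ih =>
    by_cases hm : P m
    · rw [consistentOn_playAgainst s z m hm, consistentOn_playAgainst s z' m hm]
      exact congrArg s (prefixList_congr fun i hi =>
        ih i hi fun n hn => h n (hn.trans (mem_Iio.mp hi).le))
    · rw [playAgainst_of_not s z hm, playAgainst_of_not s z' hm, h m le_rfl hm]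

variable {e : ℕ → ℕ} {V W : Set (ℕ → Bool)}

theorem HasWinningStrategy.of_comp (he : StrictMono e) (hW : HasWinningStrategy (P ∘ e) W)
    (hWV : ∀ x, (∀ n, P n → n ∉ range e → x n = false) → x ∘ e ∈ W → x ∈ V) :
    HasWinningStrategy P V := by
  obtain ⟨s, hs⟩ := hW
  let reply (x : ℕ → Bool) : ℕ → Bool :=
    Function.extend e (fun k => s (prefixList (x ∘ e) k)) fun _ => false
  have reply_apply (x : ℕ → Bool) (k : ℕ) : reply x (e k) = s (prefixList (x ∘ e) k) :=
    he.injective.extend_apply _ _ k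
  have reply_eq_false (x : ℕ → Bool) {n : ℕ} (hn : n ∉ range e) : reply x n = false :=
    Function.extend_apply' _ _ _ hn
  have reply_causal : ∀ n, P n → ∀ x y, EqOn x y (Iio n) → reply x n = reply y n := by
    intro n _ x y hxy
    by_cases hn : n ∈ range e
    · obtain ⟨k, rfl⟩ := hn
      rw [reply_apply, reply_apply]
      exact congrArg s (prefixList_congr fun i hi => hxy (he hi))
    · rw [reply_eq_false x hn, reply_eq_false y hn]
  obtain ⟨t, ht⟩ := exists_strategy_consistentOn_iff reply_causal
  refine ⟨t, fun x hx => ?_⟩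
  have hreply : ∀ n, P n → x n = reply x n := (ht x).mp hx
  refine hWV x (fun n hn hne => (hreply n hn).trans (reply_eq_false x hne)) (hs _ ?_)
  exact fun k hk => (hreply (e k) hk).trans (reply_apply x k)

theorem HasWinningStrategy.comp (he : StrictMono e) (hV : HasWinningStrategy P V)
    (hVW : ∀ x, (∀ n, ¬P n → n ∉ range e → x n = false) → x ∈ V → x ∘ e ∈ W) :
    HasWinningStrategy (P ∘ e) W := by
  obtain ⟨s, hs⟩ := hV
  let simulation (y : ℕ → Bool) : ℕ → Bool :=
    playAgainst P s (Function.extend e y fun _ => false)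
  have simulation_causal : ∀ k, P (e k) → ∀ y z, EqOn y z (Iio k) →
      simulation y (e k) = simulation z (e k) := by
    refine fun k hk y z hyz => playAgainst_congr s fun n hn hPn => ?_
    exact eqOn_extend_Iio he hyz _ (hn.lt_of_ne fun h => hPn (h ▸ hk))
  obtain ⟨t, ht⟩ := exists_strategy_consistentOn_iff (P := P ∘ e)
    (F := fun y k => simulation y (e k)) simulation_causal
  refine ⟨t, fun y hy => ?_⟩
  have simulation_comp : simulation y ∘ e = y := by
    funext k
    by_cases hk : P (e k)
    · exact ((ht y).mp hy k hk).symm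
    · exact (playAgainst_of_not s _ hk).trans (he.injective.extend_apply _ _ k)
  rw [← simulation_comp]
  refine hVW _ (fun n hn hne => ?_) (hs _ (consistentOn_playAgainst s _))
  exact (playAgainst_of_not s _ hn).trans (Function.extend_apply' _ _ _ hne)

end Strategies

theorem even_apply_iff {e : ℕ → ℕ}
    (h : ∀ ℓ, Even (e (2 * ℓ)) ∧ e (2 * ℓ + 1) = e (2 * ℓ) + 1) (k : ℕ) :
    Even (e k) ↔ Even k := by
  obtain ⟨ℓ, rfl | rfl⟩ := Nat.even_or_odd' k
  · simp only [(h ℓ).1, even_two_mul]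
  · simp only [(h ℓ).2, Nat.even_add_one, (h ℓ).1, even_two_mul]

theorem winning_Wdelta_iff_winning_W_general {e : ℕ → ℕ} (he : StrictMono e)
    (heven : ∀ k, Even (e k) ↔ Even k) {W V : Set (ℕ → Bool)}
    (hVW : ∀ x ∈ V, x ∘ e ∈ W)
    (hWV : ∀ x, (∀ k, Even k → k ∉ range e → x k = false) → x ∘ e ∈ W → x ∈ V) :
    ((∃ sI : List Bool → Bool, ∀ x : ℕ → Bool, ConsistentI sI x → x ∈ V) ↔
      (∃ sI : List Bool → Bool, ∀ x : ℕ → Bool, ConsistentI sI x → x ∈ W)) ∧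
    ((∃ sII : List Bool → Bool, ∀ x : ℕ → Bool, ConsistentII sII x → x ∉ V) ↔
      (∃ sII : List Bool → Bool, ∀ x : ℕ → Bool, ConsistentII sII x → x ∉ W)) := by
  change (HasWinningStrategy Even V ↔ HasWinningStrategy Even W) ∧
    (HasWinningStrategy Odd Vᶜ ↔ HasWinningStrategy Odd Wᶜ)
  have even_comp : Even ∘ e = Even := funext fun k => propext (heven k)
  have odd_comp : Odd ∘ e = Odd := funext fun k => propext <| by
    simp only [Function.comp_apply, ← Nat.not_even_iff_odd, heven]
  refine ⟨⟨fun h => ?_, fun h => ?_⟩, ⟨fun h => ?_, fun h => ?_⟩⟩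
  · exact even_comp ▸ h.comp he fun x _ => hVW x
  · exact HasWinningStrategy.of_comp he (even_comp.symm ▸ h) hWV
  · refine odd_comp ▸ h.comp he fun x hx hxV hxW => hxV (hWV x (fun k hk => hx k ?_) hxW)
    exact Nat.not_odd_iff_even.mpr hk
  · exact HasWinningStrategy.of_comp he (odd_comp.symm ▸ h) fun x _ => mt (hVW x)

/-- A player has a winning strategy in the game with target set `W_δ` iff she has one in the
game with target set `W`. -/
theorem winning_Wdelta_iff_winning_W (δ : ℝ) (hδ : δ ∈ Set.Icc (1 / 2 : ℝ) 1)
    (e : ℕ → ℕ) (he : StrictMono e)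
    (heEven : ∀ ℓ : ℕ, Even (e (2 * ℓ)) ∧ e (2 * ℓ + 1) = e (2 * ℓ) + 1)
    (hN : Tendsto (fun n : ℕ => ((Set.range e ∩ Set.Iic n).ncard : ℝ) / (n + 1))
      atTop (nhds 0))
    (M : Set ℕ) (hMinf : M.Infinite) (hMeven : ∀ k ∈ M, Even k)
    (hMN : Disjoint M (Set.range e))
    (hM : Tendsto (fun n : ℕ => ((M ∩ Set.Iic n).ncard : ℝ) / (n + 1))
      atTop (nhds (δ - 1 / 2)))
    (W : Set (ℕ → Bool)) (hW0 : (fun _ => false) ∈ W)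
    (Wδ : Set (ℕ → Bool))
    (hWδ : Wδ = {x : ℕ → Bool |
      (∀ k : ℕ, Even k → k ∉ M ∪ Set.range e → x k = false) ∧ (fun k => x (e k)) ∈ W}) :
    ((∃ sI : List Bool → Bool, ∀ x : ℕ → Bool, ConsistentI sI x → x ∈ Wδ) ↔
      (∃ sI : List Bool → Bool, ∀ x : ℕ → Bool, ConsistentI sI x → x ∈ W)) ∧
    ((∃ sII : List Bool → Bool, ∀ x : ℕ → Bool, ConsistentII sII x → x ∉ Wδ) ↔
      (∃ sII : List Bool → Bool, ∀ x : ℕ → Bool, ConsistentII sII x → x ∉ W)) := by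
  subst hWδ
  exact winning_Wdelta_iff_winning_W_general he (even_apply_iff heEven) (fun x hx => hx.2)
    fun x hx hxW => ⟨fun k hk hkN => hx k hk fun hke => hkN (Or.inr hke), hxW⟩
end

section
/- Let (X,d) be a complete metric space that is doubling with some constant D ∈ ℕ, let α, β ∈ (0,1), and let S ⊆ X. Suppose there exist a point x̃ ∈ X, a radius ρ̃ > 0, and an integer m ≥ 1 such that for every ρ ∈ (0, ρ̃) and every y ∈ X with B̄(y,ρ) ⊆ B̄(x̃,ρ̃), there exist points z₁,…,z_m ∈ X with B̄(z_j, β·ρ) ⊆ B̄(y,ρ) for each j and with the interiors of the closed balls B̄(z_j, β·ρ) pairwise disjoint. If dim_H(S) < log(m) / log(1/(α·β)), then Player II has a winning strategy in the (α,β)-Schmidt game with target set S. -/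
open Metric Set
open scoped ENNReal

/-- `X` is a doubling metric space with doubling constant `D`. -/
def IsDoublingWith (X : Type*) [PseudoMetricSpace X] (D : ℕ) : Prop :=
  ∀ (x : X) (r : ℝ), 0 < r → ∃ t : Finset X, t.card ≤ D ∧
    closedBall x r ⊆ ⋃ y ∈ t, closedBall y (r / 2)

/-- The radius `ρ_n = α^(⌊n/2⌋+1) · β^(⌈n/2⌉) · ρ₋₁` of the ball chosen at stage `n` of the
`(α,β)`-Schmidt game that starts with a ball of radius `ρinit` (Player I shrinks by `α` at
even stages, Player II by `β` at odd stages). -/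
noncomputable def rho (α β ρinit : ℝ) (n : ℕ) : ℝ := α ^ (n / 2 + 1) * β ^ ((n + 1) / 2) * ρinit

variable {X : Type*} [MetricSpace X]

/-- The ball chosen at stage `k` of the play `y` is contained in the previously chosen ball
(with the ball of radius `ρinit` around `c` chosen by Player II before stage `0`). -/
def AdmAt (α β : ℝ) (c : X) (ρinit : ℝ) (y : ℕ → X) (k : ℕ) : Prop :=
  closedBall (y k) (rho α β ρinit k) ⊆
    if k = 0 then closedBall c ρinit else closedBall (y (k - 1)) (rho α β ρinit (k - 1))

/-- The play `y` is admissible before stage `n`. -/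
def AdmUpTo (α β : ℝ) (c : X) (ρinit : ℝ) (y : ℕ → X) (n : ℕ) : Prop :=
  ∀ k < n, AdmAt α β c ρinit y k

/-! For `m ≥ 2`, a set `S` that is null at the exponent `log m / log (1 / (αβ))` is covered, for any
`ε > 0`, by sets `T i` no wider than Player II's radius at some stage `2 * j i + 1`, with
`∑ m ^ (-j i) < ε`, since `αβ` to this exponent is `m⁻¹`. Weigh a position by `∑ m ^ (-j i) * N i`,
where `N i` is the largest number of balls of that radius that touch `T i` and have disjoint
interiors inside the position. By doubling `N i ≤ D ^ 3`, so the initial potential is less than `1`.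
As `N i` is superadditive on disjoint sets, one of the `m` disjoint replies divides the potential by
`m`; Player II always plays it. If the play converged to a point of `T i`, then her ball of stage
`2 * j i + 1` would touch `T i` and have potential at least `m ^ (-j i)`, while the initial
potential has been divided by `m` already `j i + 1` times. -/

open Filter MeasureTheory Topology

section Packing

variable {E ι : Type*} [PseudoMetricSpace E]

theorem IsDoublingWith.exists_cover {D : ℕ} (hD : IsDoublingWith E D) (k : ℕ) (x : E) {r : ℝ}
    (hr : 0 < r) : ∃ t : Finset E, t.card ≤ D ^ k ∧
      closedBall x r ⊆ ⋃ y ∈ t, closedBall y (r / 2 ^ k) := by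
  classical
  induction k generalizing x r with
  | zero => exact ⟨{x}, by simp, by simp⟩
  | succ k ih =>
    obtain ⟨t, ht_card, ht⟩ := hD x r hr
    choose g hg_card hg using fun y => ih y (half_pos hr)
    refine ⟨t.biUnion g, ?_, fun p hp => ?_⟩
    · calc (t.biUnion g).card ≤ t.card * D ^ k :=
            Finset.card_biUnion_le_card_mul _ _ _ fun y _ => hg_card y
        _ ≤ D ^ (k + 1) := by rw [pow_succ']; gcongr
    · obtain ⟨y, hy, hpy⟩ := mem_iUnion₂.1 (ht hp)
      obtain ⟨z, hz, hpz⟩ := mem_iUnion₂.1 (hg y hpy)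
      refine mem_iUnion₂.2 ⟨z, Finset.mem_biUnion.2 ⟨y, hy, hz⟩, ?_⟩
      rwa [pow_succ', ← div_div]

theorem IsDoublingWith.card_le_of_separated {D : ℕ} (hD : IsDoublingWith E D) {k : ℕ} {x : E}
    {r s : ℝ} (hr : 0 < r) (hrs : 2 * (r / 2 ^ k) < s) {P : Finset E}
    (hP : ↑P ⊆ closedBall x r) (hsep : (P : Set E).Pairwise fun p q => s ≤ dist p q) :
    P.card ≤ D ^ k := by
  obtain ⟨t, ht_card, ht⟩ := hD.exists_cover k x hr
  have hcenter : ∀ p ∈ P, ∃ y ∈ t, dist p y ≤ r / 2 ^ k := fun p hp => by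
    simpa using ht (hP hp)
  have : Nonempty E := ⟨x⟩
  choose! g hgt hg using hcenter
  refine (Finset.card_le_card_of_injOn g hgt fun p hp q hq hpq => ?_).trans ht_card
  by_contra hne
  have hp_near := hg p hp
  have hq_near := hg q hq
  rw [← hpq] at hq_near
  linarith [hsep hp hq hne, dist_triangle_right p q (g p)]

theorem le_dist_of_disjoint_interior_closedBall {x y : E} {r : ℝ} (hr : 0 < r)
    (h : Disjoint (interior (closedBall x r)) (interior (closedBall y r))) : r ≤ dist x y := by
  by_contra! hlt
  exact disjoint_left.1 h (ball_subset_interior_closedBall (mem_ball_self hr))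
    (ball_subset_interior_closedBall (mem_ball.2 hlt))

/-- `P` is the set of centers of a packing of `V` by balls of radius `s` touching `T`. Packings are
taken with respect to the interiors of the closed balls, as in the Schmidt game. -/
structure IsBallPacking (s : ℝ) (T V : Set E) (P : Finset E) : Prop where
  subset : ∀ p ∈ P, interior (closedBall p s) ⊆ V
  inter_nonempty : ∀ p ∈ P, (closedBall p s ∩ T).Nonempty
  disjoint : (P : Set E).PairwiseDisjoint fun p => interior (closedBall p s)

theorem isBallPacking_empty (s : ℝ) (T V : Set E) : IsBallPacking s T V ∅ :=
  ⟨by simp, by simp, by simp⟩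

theorem IsBallPacking.union [DecidableEq E] {s : ℝ} {T V W : Set E} {P Q : Finset E}
    (hP : IsBallPacking s T V P) (hQ : IsBallPacking s T W Q) (hVW : Disjoint V W) :
    IsBallPacking s T (V ∪ W) (P ∪ Q) where
  subset p hp := (Finset.mem_union.1 hp).elim
    (fun h => (hP.subset p h).trans subset_union_left)
    fun h => (hQ.subset p h).trans subset_union_right
  inter_nonempty p hp := (Finset.mem_union.1 hp).elim (hP.inter_nonempty p) (hQ.inter_nonempty p)
  disjoint := by
    rw [Finset.coe_union]
    exact hP.disjoint.union hQ.disjoint fun p hp q hq _ =>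
      hVW.mono (hP.subset p hp) (hQ.subset q hq)

theorem IsBallPacking.disjoint_centers {s : ℝ} (hs : 0 < s) {T V W : Set E} {P Q : Finset E}
    (hP : IsBallPacking s T V P) (hQ : IsBallPacking s T W Q) (hVW : Disjoint V W) :
    Disjoint P Q :=
  Finset.disjoint_left.2 fun p hp hq =>
    have hmem : p ∈ interior (closedBall p s) := ball_subset_interior_closedBall (mem_ball_self hs)
    disjoint_left.1 hVW (hP.subset p hp hmem) (hQ.subset p hq hmem)

theorem IsBallPacking.card_le {D : ℕ} (hD : IsDoublingWith E D) {s : ℝ} (hs : 0 < s)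
    {T V : Set E} (hT : ediam T ≤ ENNReal.ofReal s) {P : Finset E} (hP : IsBallPacking s T V P) :
    P.card ≤ D ^ 3 := by
  rcases P.eq_empty_or_nonempty with rfl | ⟨a, ha⟩
  · simp
  refine hD.card_le_of_separated (x := a) (r := 3 * s) (s := s) (by positivity) (by linarith)
    (fun p hp => ?_) fun p hp q hq hpq =>
      le_dist_of_disjoint_interior_closedBall hs (hP.disjoint hp hq hpq)
  obtain ⟨u, hup, huT⟩ := hP.inter_nonempty p hp
  obtain ⟨v, hva, hvT⟩ := hP.inter_nonempty a ha
  have huv : dist u v ≤ s := by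
    rw [← edist_le_ofReal hs.le]
    exact (edist_le_ediam_of_mem huT hvT).trans hT
  rw [mem_closedBall'] at hup
  rw [mem_closedBall] at hva ⊢
  linarith [dist_triangle4 p u v a]

/-- The largest number of balls of radius `s` touching `T` in a packing of `V`. It takes values in
`ℝ≥0∞`, so that no a priori bound on the size of packings is needed. -/
noncomputable def ballPackingNumber (s : ℝ) (T V : Set E) : ℝ≥0∞ :=
  ⨆ P ∈ {P : Finset E | IsBallPacking s T V P}, (P.card : ℝ≥0∞)

theorem IsBallPacking.card_le_ballPackingNumber {s : ℝ} {T V : Set E} {P : Finset E}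
    (hP : IsBallPacking s T V P) : (P.card : ℝ≥0∞) ≤ ballPackingNumber s T V :=
  le_iSup₂_of_le P hP le_rfl

theorem one_le_ballPackingNumber {s : ℝ} {T : Set E} {x : E} (h : (closedBall x s ∩ T).Nonempty) :
    1 ≤ ballPackingNumber s T (interior (closedBall x s)) := by
  have hP : IsBallPacking s T (interior (closedBall x s)) {x} := ⟨by simp, by simpa, by simp⟩
  simpa using hP.card_le_ballPackingNumber

theorem ballPackingNumber_le {D : ℕ} (hD : IsDoublingWith E D) {s : ℝ} (hs : 0 < s) {T : Set E}
    (hT : ediam T ≤ ENNReal.ofReal s) (V : Set E) : ballPackingNumber s T V ≤ (D : ℝ≥0∞) ^ 3 :=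
  iSup₂_le fun _ hP => mod_cast hP.card_le hD hs hT

theorem ballPackingNumber_mono (s : ℝ) (T : Set E) : Monotone (ballPackingNumber s T) :=
  fun _ _ hVW => iSup₂_le fun _ hP => IsBallPacking.card_le_ballPackingNumber
    ⟨fun p hp => (hP.subset p hp).trans hVW, hP.inter_nonempty, hP.disjoint⟩

theorem ballPackingNumber_add_le {s : ℝ} (hs : 0 < s) (T : Set E) {V W : Set E}
    (hVW : Disjoint V W) :
    ballPackingNumber s T V + ballPackingNumber s T W ≤ ballPackingNumber s T (V ∪ W) := by
  classical
  refine ENNReal.biSup_add_biSup_le ⟨∅, isBallPacking_empty s T V⟩ ⟨∅, isBallPacking_empty s T W⟩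
    fun P hP Q hQ => ?_
  rw [← Nat.cast_add, ← Finset.card_union_of_disjoint (hP.disjoint_centers hs hQ hVW)]
  exact (hP.union hQ hVW).card_le_ballPackingNumber

theorem sum_ballPackingNumber_le {s : ℝ} (hs : 0 < s) (T : Set E) (L : Finset ι) {V : ι → Set E}
    (hV : (L : Set ι).PairwiseDisjoint V) :
    ∑ l ∈ L, ballPackingNumber s T (V l) ≤ ballPackingNumber s T (⋃ l ∈ L, V l) := by
  classical
  induction L using Finset.induction_on with
  | empty => simp
  | insert a L ha ih =>
    rw [Finset.coe_insert, pairwiseDisjoint_insert_of_notMem (by simpa using ha)] at hV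
    rw [Finset.sum_insert ha, Finset.set_biUnion_insert]
    grw [ih hV.1]
    exact ballPackingNumber_add_le hs T (disjoint_iUnion₂_right.2 hV.2)

/-- The potential of a position `V` against the sets `T i`: each ball of radius `s i` that touches
`T i` and fits into `V` weighs `w i`. -/
noncomputable def packingPotential (w : ι → ℝ≥0∞) (s : ι → ℝ) (T : ι → Set E) (V : Set E) :
    ℝ≥0∞ :=
  ∑' i, w i * ballPackingNumber (s i) (T i) V

theorem packingPotential_mono (w : ι → ℝ≥0∞) (s : ι → ℝ) (T : ι → Set E) :
    Monotone (packingPotential w s T) := fun _ _ hVW =>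
  ENNReal.tsum_le_tsum fun i => by gcongr; exact ballPackingNumber_mono _ _ hVW

theorem le_packingPotential (w : ι → ℝ≥0∞) {s : ι → ℝ} {T : ι → Set E} {i : ι} {x : E}
    (h : (closedBall x (s i) ∩ T i).Nonempty) :
    w i ≤ packingPotential w s T (interior (closedBall x (s i))) := calc
  w i ≤ w i * ballPackingNumber (s i) (T i) (interior (closedBall x (s i))) :=
    le_mul_of_one_le_right' (one_le_ballPackingNumber h)
  _ ≤ _ := ENNReal.le_tsum i

theorem packingPotential_le {D : ℕ} (hD : IsDoublingWith E D) (w : ι → ℝ≥0∞) {s : ι → ℝ}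
    (hs : ∀ i, 0 < s i) {T : ι → Set E} (hT : ∀ i, ediam (T i) ≤ ENNReal.ofReal (s i))
    (V : Set E) : packingPotential w s T V ≤ (∑' i, w i) * (D : ℝ≥0∞) ^ 3 := by
  rw [← ENNReal.tsum_mul_right]
  refine ENNReal.tsum_le_tsum fun i => ?_
  gcongr
  exact ballPackingNumber_le hD (hs i) (hT i) V

theorem exists_mul_packingPotential_le (w : ι → ℝ≥0∞) {s : ι → ℝ} (hs : ∀ i, 0 < s i)
    (T : ι → Set E) {m : ℕ} (hm : 0 < m) {V : Fin m → Set E} {W : Set E} (hVW : ∀ l, V l ⊆ W)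
    (hV : Pairwise fun l l' => Disjoint (V l) (V l')) :
    ∃ l, m * packingPotential w s T (V l) ≤ packingPotential w s T W := by
  obtain ⟨l, -, hl⟩ := Finset.univ.exists_min_image (fun l => packingPotential w s T (V l))
    ⟨⟨0, hm⟩, Finset.mem_univ _⟩
  refine ⟨l, ?_⟩
  calc m * packingPotential w s T (V l)
      ≤ ∑ l', packingPotential w s T (V l') := by
        simpa using Finset.card_nsmul_le_sum _ _ _ hl
    _ = ∑' i, w i * ∑ l', ballPackingNumber (s i) (T i) (V l') := by
        simp only [packingPotential, Finset.mul_sum]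
        exact (Summable.tsum_finsetSum fun _ _ => ENNReal.summable).symm
    _ ≤ packingPotential w s T W := ENNReal.tsum_le_tsum fun i => by
        gcongr
        exact (sum_ballPackingNumber_le (hs i) (T i) Finset.univ (hV.set_pairwise _)).trans
          (ballPackingNumber_mono _ _ (iUnion₂_subset fun l' _ => hVW l'))

end Packing

section Covers

variable {E : Type*} [EMetricSpace E] [MeasurableSpace E] [BorelSpace E] {S : Set E} {t : ℝ}

theorem exists_cover_of_hausdorffMeasure_eq_zero (ht : 0 < t) (hS : μH[t] S = 0) {ε : ℝ≥0∞}
    (hε : ε ≠ 0) : ∃ (T : ℕ → Set E) (d : ℕ → ℝ≥0∞), S ⊆ ⋃ n, T n ∧ (∀ n, d n ≠ 0) ∧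
      (∀ n, ediam (T n) ≤ d n) ∧ ∑' n, d n ^ t < ε := by
  have hε2 : ε / 2 ≠ 0 := by simpa
  obtain ⟨T, hST, hT⟩ : ∃ T : ℕ → Set E, S ⊆ ⋃ n, T n ∧ ∑' n, ediam (T n) ^ t < ε / 2 := by
    rw [Measure.hausdorffMeasure_apply] at hS
    have hlt := (iSup₂_eq_bot.1 hS 1 one_pos).trans_lt (pos_iff_ne_zero.2 hε2)
    simp only [iInf_lt_iff] at hlt
    obtain ⟨T, hST, -, hT⟩ := hlt
    refine ⟨T, hST, hT.trans_le' (ENNReal.tsum_le_tsum fun n => ?_)⟩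
    rcases (T n).eq_empty_or_nonempty with h | h
    · simp [h, ht]
    · simp [h]
  obtain ⟨δ, hδ0, hδ⟩ := ENNReal.exists_pos_sum_of_countable' hε2 ℕ
  have hpow : ∀ n, ((ediam (T n) ^ t + δ n) ^ t⁻¹) ^ t = ediam (T n) ^ t + δ n :=
    fun n => ENNReal.rpow_inv_rpow ht.ne' _
  refine ⟨T, fun n => (ediam (T n) ^ t + δ n) ^ t⁻¹, hST, fun n => ?_, fun n => ?_, ?_⟩
  · simp [ht.not_gt, (hδ0 n).ne']
  · rw [ENNReal.le_rpow_inv_iff ht]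
    exact le_self_add
  · simp only [hpow, ENNReal.tsum_add]
    exact (ENNReal.add_lt_add hT hδ).trans_eq (ENNReal.add_halves ε)

theorem exists_pow_near_ofReal_mul {q ρ : ℝ} (hq0 : 0 < q) (hq1 : q < 1) (hρ : 0 < ρ) {d : ℝ≥0∞}
    (hd0 : d ≠ 0) (hd : d ≤ ENNReal.ofReal ρ) :
    ∃ j : ℕ, d ≤ ENNReal.ofReal (q ^ j * ρ) ∧ ENNReal.ofReal (q ^ (j + 1) * ρ) ≤ d := by
  lift d to NNReal using (hd.trans_lt ENNReal.ofReal_lt_top).ne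
  have hd0' : (0 : ℝ) < d := by simpa [pos_iff_ne_zero] using hd0
  rw [ENNReal.le_ofReal_iff_toReal_le ENNReal.coe_ne_top hρ.le, ENNReal.coe_toReal] at hd
  obtain ⟨j, hj1, hj2⟩ := exists_nat_pow_near_of_lt_one (div_pos hd0' hρ) ((div_le_one hρ).2 hd)
    hq0 hq1
  refine ⟨j, ?_, ?_⟩
  · rw [ENNReal.le_ofReal_iff_toReal_le ENNReal.coe_ne_top (by positivity), ENNReal.coe_toReal]
    exact (div_le_iff₀ hρ).1 hj2
  · rw [ENNReal.ofReal_le_iff_le_toReal ENNReal.coe_ne_top, ENNReal.coe_toReal]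
    exact ((lt_div_iff₀ hρ).1 hj1).le

theorem exists_geometric_cover_of_hausdorffMeasure_eq_zero (ht : 0 < t) (hS : μH[t] S = 0)
    {q ρ : ℝ} (hq0 : 0 < q) (hq1 : q < 1) (hρ : 0 < ρ) {ε : ℝ≥0∞} (hε : ε ≠ 0) :
    ∃ (T : ℕ → Set E) (j : ℕ → ℕ), S ⊆ ⋃ n, T n ∧
      (∀ n, ediam (T n) ≤ ENNReal.ofReal (q ^ j n * ρ)) ∧
      ∑' n, (ENNReal.ofReal q ^ t) ^ j n < ε := by
  set R : ℝ≥0∞ := ENNReal.ofReal (q * ρ) with hR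
  have hR0 : R ^ t ≠ 0 := by
    rw [ne_eq, ENNReal.rpow_eq_zero_iff_of_pos ht, hR, ENNReal.ofReal_eq_zero, not_le]
    positivity
  have hRtop : R ^ t ≠ ∞ := ENNReal.rpow_ne_top_of_nonneg ht.le ENNReal.ofReal_ne_top
  obtain ⟨T, d, hST, hd0, hTd, hsum⟩ := exists_cover_of_hausdorffMeasure_eq_zero ht hS
    (mul_ne_zero (lt_min one_pos (pos_iff_ne_zero.2 hε)).ne' hR0)
  have hdρ : ∀ n, d n ≤ ENNReal.ofReal ρ := fun n => calc
    d n ≤ R := by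
      rw [← ENNReal.rpow_le_rpow_iff ht]
      calc d n ^ t ≤ ∑' n, d n ^ t := ENNReal.le_tsum n
        _ ≤ min 1 ε * R ^ t := hsum.le
        _ ≤ R ^ t := mul_le_of_le_one_left' (min_le_left _ _)
    _ ≤ ENNReal.ofReal ρ := ENNReal.ofReal_le_ofReal (mul_le_of_le_one_left hρ.le hq1.le)
  choose j hdj hjd using fun n => exists_pow_near_ofReal_mul hq0 hq1 hρ (hd0 n) (hdρ n)
  have hweight : ∀ n, (ENNReal.ofReal q ^ t) ^ j n * R ^ t ≤ d n ^ t := fun n => by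
    rw [← ENNReal.rpow_mul_natCast, mul_comm t, ENNReal.rpow_natCast_mul,
      ← ENNReal.mul_rpow_of_nonneg _ _ ht.le, hR, ← ENNReal.ofReal_pow hq0.le,
      ← ENNReal.ofReal_mul (by positivity), ← mul_assoc, ← pow_succ]
    exact ENNReal.rpow_le_rpow (hjd n) ht.le
  refine ⟨T, j, hST, fun n => (hTd n).trans (hdj n), ?_⟩
  rw [← ENNReal.mul_lt_mul_iff_left hR0 hRtop, ← ENNReal.tsum_mul_right]
  calc ∑' n, (ENNReal.ofReal q ^ t) ^ j n * R ^ t ≤ ∑' n, d n ^ t := ENNReal.tsum_le_tsum hweight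
    _ < min 1 ε * R ^ t := hsum
    _ ≤ ε * R ^ t := by gcongr; exact min_le_right _ _

end Covers

theorem rpow_log_div_log_one_div {q x : ℝ} (hq0 : 0 < q) (hq1 : q ≠ 1) (hx : 0 < x) :
    q ^ (Real.log x / Real.log (1 / q)) = x⁻¹ := by
  have hexp : Real.log x / Real.log (1 / q) = Real.logb q x⁻¹ := by
    simp [Real.logb, Real.log_inv, div_neg, neg_div]
  rw [hexp, Real.rpow_logb hq0 hq1 (inv_pos.2 hx)]

section Plays

variable {α β ρ : ℝ} {c : X} {y : ℕ → X}

theorem rho_two_mul (α β ρ : ℝ) (k : ℕ) : rho α β ρ (2 * k) = α * ((α * β) ^ k * ρ) := by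
  rw [rho, show 2 * k / 2 = k by lia, show (2 * k + 1) / 2 = k by lia]
  ring

theorem rho_two_mul_add_one (α β ρ : ℝ) (k : ℕ) :
    rho α β ρ (2 * k + 1) = (α * β) ^ k * (α * β * ρ) := by
  rw [rho, show (2 * k + 1) / 2 = k by lia, show (2 * k + 1 + 1) / 2 = k + 1 by lia]
  ring

theorem rho_two_mul_add_one_eq_mul (α β ρ : ℝ) (k : ℕ) :
    rho α β ρ (2 * k + 1) = β * rho α β ρ (2 * k) := by
  rw [rho_two_mul, rho_two_mul_add_one]
  ring

theorem rho_pos (hα : 0 < α) (hβ : 0 < β) (hρ : 0 < ρ) (n : ℕ) : 0 < rho α β ρ n := by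
  unfold rho
  positivity

theorem rho_two_mul_lt (hα : α ∈ Ioo 0 1) (hβ : β ∈ Ioo 0 1) (hρ : 0 < ρ) (k : ℕ) :
    rho α β ρ (2 * k) < ρ := calc
  rho α β ρ (2 * k) = α * ((α * β) ^ k * ρ) := rho_two_mul α β ρ k
  _ < (α * β) ^ k * ρ := by
    have := hα.1
    have := hβ.1
    exact mul_lt_of_lt_one_left (by positivity) hα.2
  _ ≤ ρ := mul_le_of_le_one_left hρ.le (pow_le_one₀ (mul_nonneg hα.1.le hβ.1.le)
    (mul_le_one₀ hα.2.le hβ.1.le hβ.2.le))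

theorem tendsto_rho (hα : α ∈ Ioo 0 1) (hβ : β ∈ Ioo 0 1) (ρ : ℝ) :
    Tendsto (rho α β ρ) atTop (𝓝 0) := by
  have hhalf : Tendsto (fun n : ℕ => n / 2) atTop atTop := Nat.tendsto_div_const_atTop two_ne_zero
  have hαpow := (tendsto_pow_atTop_nhds_zero_of_lt_one hα.1.le hα.2).comp
    ((tendsto_add_atTop_nat 1).comp hhalf)
  have hβpow := (tendsto_pow_atTop_nhds_zero_of_lt_one hβ.1.le hβ.2).comp
    (hhalf.comp (tendsto_add_atTop_nat 1))
  simpa [funext (rho.eq_1 α β ρ), Function.comp_def] using (hαpow.mul hβpow).mul_const ρ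

theorem AdmAt.subset_initial (h : AdmAt α β c ρ y 0) :
    closedBall (y 0) (rho α β ρ 0) ⊆ closedBall c ρ := by
  simpa [AdmAt] using h

theorem AdmAt.subset_pred {k : ℕ} (h : AdmAt α β c ρ y (k + 1)) :
    closedBall (y (k + 1)) (rho α β ρ (k + 1)) ⊆ closedBall (y k) (rho α β ρ k) := by
  simpa [AdmAt] using h

theorem AdmUpTo.subset_initial {k : ℕ} (h : AdmUpTo α β c ρ y (k + 1)) :
    closedBall (y k) (rho α β ρ k) ⊆ closedBall c ρ := by
  induction k with
  | zero => exact (h 0 one_pos).subset_initial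
  | succ k ih =>
    exact (h (k + 1) (Nat.lt_succ_self _)).subset_pred.trans
      (ih fun i hi => h i (hi.trans (Nat.lt_succ_self _)))

theorem nonempty_iInter_closedBall_of_admAt [CompleteSpace X] (hα : α ∈ Ioo 0 1)
    (hβ : β ∈ Ioo 0 1) (hρ : 0 < ρ) (hy : ∀ k, AdmAt α β c ρ y k) :
    (⋂ n, closedBall (y n) (rho α β ρ n)).Nonempty := by
  have hrho : ∀ n, 0 ≤ rho α β ρ n := fun n => (rho_pos hα.1 hβ.1 hρ n).le
  have hanti : Antitone fun n => closedBall (y n) (rho α β ρ n) :=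
    antitone_nat_of_succ_le fun n => (hy (n + 1)).subset_pred
  refine nonempty_iInter_of_nonempty_biInter (fun _ => isClosed_closedBall)
    (fun _ => isBounded_closedBall) (fun N => ⟨y N, ?_⟩) ?_
  · exact mem_iInter₂.2 fun n hn => hanti hn (mem_closedBall_self (hrho N))
  · exact squeeze_zero (fun _ => diam_nonneg) (fun n => diam_closedBall (hrho n))
      (by simpa using (tendsto_rho hα hβ ρ).const_mul 2)

theorem pow_mul_le_of_admAt {F : Set X → ℝ≥0∞} (hF : Monotone F) {M : ℝ≥0∞}
    (hadm : ∀ k, AdmAt α β c ρ y k)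
    (hM : ∀ k, M * F (closedBall (y (2 * k + 1)) (rho α β ρ (2 * k + 1))) ≤
      F (closedBall (y (2 * k)) (rho α β ρ (2 * k)))) (k : ℕ) :
    M ^ (k + 1) * F (closedBall (y (2 * k + 1)) (rho α β ρ (2 * k + 1))) ≤ F (closedBall c ρ) := by
  induction k with
  | zero => simpa using (hM 0).trans (hF (hadm 0).subset_initial)
  | succ k ih =>
    calc M ^ (k + 1 + 1) * F (closedBall (y (2 * (k + 1) + 1)) (rho α β ρ (2 * (k + 1) + 1)))
        ≤ M ^ (k + 1) * F (closedBall (y (2 * (k + 1))) (rho α β ρ (2 * (k + 1)))) := by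
          rw [pow_succ, mul_assoc]
          gcongr
          exact hM (k + 1)
      _ ≤ M ^ (k + 1) * F (closedBall (y (2 * k + 1)) (rho α β ρ (2 * k + 1))) := by
          gcongr
          exact hF (hadm (2 * k + 1 + 1)).subset_pred
      _ ≤ F (closedBall c ρ) := ih

/-- Player II wins the `(α,β)`-Schmidt game with target set `S`: after opening with the ball of
radius `ρ` around `c`, she moves at each odd stage `n` by applying `σ` to the list of the centers
chosen at the stages before `n`, her own included. -/
def PlayerIIWins (α β : ℝ) (S : Set X) : Prop :=
  ∃ (c : X) (ρ : ℝ) (σ : List X → X), 0 < ρ ∧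
    (∀ (y : ℕ → X) (n : ℕ), Odd n → AdmUpTo α β c ρ y n →
      closedBall (σ (List.ofFn fun i : Fin n => y i)) (rho α β ρ n) ⊆
        closedBall (y (n - 1)) (rho α β ρ (n - 1))) ∧
    ∀ y : ℕ → X, (∀ k, AdmAt α β c ρ y k) →
      (∀ n, Odd n → y n = σ (List.ofFn fun i : Fin n => y i)) →
      ¬ (⋂ n, closedBall (y n) (rho α β ρ n)) ⊆ S

theorem playerIIWins_of_replies {S : Set X} (hρ : 0 < ρ) {G : ℕ → X → X → Prop}
    (hG : ∀ k x, closedBall x (rho α β ρ (2 * k)) ⊆ closedBall c ρ →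
      ∃ z, closedBall z (rho α β ρ (2 * k + 1)) ⊆ closedBall x (rho α β ρ (2 * k)) ∧ G k x z)
    (hS : ∀ y : ℕ → X, (∀ k, AdmAt α β c ρ y k) → (∀ k, G k (y (2 * k)) (y (2 * k + 1))) →
      ¬ (⋂ n, closedBall (y n) (rho α β ρ n)) ⊆ S) :
    PlayerIIWins α β S := by
  have : Nonempty X := ⟨c⟩
  choose! reply hsub hreply using hG
  let σ : List X → X := fun l => reply (l.length / 2) (l.getLast?.getD c)
  have hσ : ∀ (y : ℕ → X) (k : ℕ),
      σ (List.ofFn fun i : Fin (2 * k + 1) => y i) = reply k (y (2 * k)) := fun y k => by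
    simp [σ, List.getLast?_eq_getElem?, -List.ofFn_succ, show (2 * k + 1) / 2 = k by lia]
  refine ⟨c, ρ, σ, hρ, ?_, fun y hadm hy => hS y hadm fun k => ?_⟩
  · rintro y _ ⟨k, rfl⟩ hadm
    rw [hσ, Nat.add_sub_cancel]
    exact hsub k _ hadm.subset_initial
  · rw [hy _ (odd_two_mul_add_one k), hσ]
    exact hreply k _ (AdmUpTo.subset_initial fun i _ => hadm i)

/-- The hypothesis on the ball `B̄(c,ρ)` in Schmidt's theorem: it leaves Player II a choice between
`m` replies with disjoint interiors. -/
def HasDisjointShrunkBalls (β : ℝ) (c : X) (ρ : ℝ) (m : ℕ) : Prop :=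
  ∀ r ∈ Ioo 0 ρ, ∀ x : X, closedBall x r ⊆ closedBall c ρ →
    ∃ z : Fin m → X, (∀ l, closedBall (z l) (β * r) ⊆ closedBall x r) ∧
      Pairwise fun l l' : Fin m =>
        Disjoint (interior (closedBall (z l) (β * r))) (interior (closedBall (z l') (β * r)))

theorem HasDisjointShrunkBalls.exists_reply {m : ℕ} (h : HasDisjointShrunkBalls β c ρ m)
    (hα : α ∈ Ioo 0 1) (hβ : β ∈ Ioo 0 1) (hρ : 0 < ρ) (hm : 0 < m) {ι : Type*} (w : ι → ℝ≥0∞)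
    {s : ι → ℝ} (hs : ∀ i, 0 < s i) (T : ι → Set X) {k : ℕ} {x : X}
    (hx : closedBall x (rho α β ρ (2 * k)) ⊆ closedBall c ρ) :
    ∃ z, closedBall z (rho α β ρ (2 * k + 1)) ⊆ closedBall x (rho α β ρ (2 * k)) ∧
      m * packingPotential w s T (interior (closedBall z (rho α β ρ (2 * k + 1)))) ≤
        packingPotential w s T (interior (closedBall x (rho α β ρ (2 * k)))) := by
  obtain ⟨z, hz, hdisj⟩ := h _ ⟨rho_pos hα.1 hβ.1 hρ (2 * k), rho_two_mul_lt hα hβ hρ k⟩ x hx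
  simp only [← rho_two_mul_add_one_eq_mul] at hz hdisj
  obtain ⟨l, hl⟩ := exists_mul_packingPotential_le w hs T hm (fun l => interior_mono (hz l)) hdisj
  exact ⟨z l, hz l, hl⟩

theorem playerIIWins_of_tsum_lt [CompleteSpace X] {D : ℕ} (hD : IsDoublingWith X D)
    (hα : α ∈ Ioo 0 1) (hβ : β ∈ Ioo 0 1) (hρ : 0 < ρ) {m : ℕ} (hm : 0 < m)
    (hpack : HasDisjointShrunkBalls β c ρ m) {S : Set X} {ι : Type*} {T : ι → Set X} {j : ι → ℕ}
    (hST : S ⊆ ⋃ i, T i) (hT : ∀ i, ediam (T i) ≤ ENNReal.ofReal ((α * β) ^ j i * (α * β * ρ)))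
    (hsum : (∑' i, (m : ℝ≥0∞)⁻¹ ^ j i) * (D : ℝ≥0∞) ^ 3 < 1) : PlayerIIWins α β S := by
  simp only [← rho_two_mul_add_one] at hT
  set s : ι → ℝ := fun i => rho α β ρ (2 * j i + 1)
  have hs : ∀ i, 0 < s i := fun i => rho_pos hα.1 hβ.1 hρ _
  set w : ι → ℝ≥0∞ := fun i => (m : ℝ≥0∞)⁻¹ ^ j i
  set F : Set X → ℝ≥0∞ := fun B => packingPotential w s T (interior B)
  have hF : Monotone F := fun _ _ h => packingPotential_mono w s T (interior_mono h)
  refine playerIIWins_of_replies hρ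
    (G := fun k x z => m * F (closedBall z (rho α β ρ (2 * k + 1))) ≤
      F (closedBall x (rho α β ρ (2 * k))))
    (fun _ _ => hpack.exists_reply hα hβ hρ hm w hs T) fun y hadm hy hsub => ?_
  obtain ⟨p, hp⟩ := nonempty_iInter_closedBall_of_admAt hα hβ hρ hadm
  obtain ⟨i, hi⟩ := mem_iUnion.1 (hST (hsub hp))
  have hinit : F (closedBall c ρ) < 1 := (packingPotential_le hD w hs hT _).trans_lt hsum
  refine hinit.not_ge ?_
  calc 1 ≤ (m : ℝ≥0∞) := Nat.one_le_cast.2 hm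
    _ = (m : ℝ≥0∞) ^ (j i + 1) * w i := by
        rw [pow_succ', mul_assoc, ← mul_pow, ENNReal.mul_inv_cancel (by positivity)
          (ENNReal.natCast_ne_top m), one_pow, mul_one]
    _ ≤ (m : ℝ≥0∞) ^ (j i + 1) * F (closedBall (y (2 * j i + 1)) (s i)) := by
        gcongr
        exact le_packingPotential w ⟨p, mem_iInter.1 hp _, hi⟩
    _ ≤ F (closedBall c ρ) := pow_mul_le_of_admAt hF hadm hy (j i)

end Plays

theorem playerII_wins_schmidt_game_general [CompleteSpace X] [MeasurableSpace X] [BorelSpace X]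
    {D : ℕ} (hD : IsDoublingWith X D) {α β : ℝ} (hα : α ∈ Ioo 0 1) (hβ : β ∈ Ioo 0 1) {S : Set X}
    {x₀ : X} {ρ₀ : ℝ} (hρ₀ : 0 < ρ₀) {m : ℕ} (hm : 1 ≤ m)
    (hpack : HasDisjointShrunkBalls β x₀ ρ₀ m)
    (hS : μH[Real.log m / Real.log (1 / (α * β))] S = 0) : PlayerIIWins α β S := by
  have hq0 : 0 < α * β := mul_pos hα.1 hβ.1
  have hq1 : α * β < 1 := mul_lt_one_of_nonneg_of_lt_one_left hα.1.le hα.2 hβ.2.le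
  rcases hm.eq_or_lt with rfl | hm
  · have hS_empty : S = ∅ := by
      rw [Nat.cast_one, Real.log_one, zero_div] at hS
      by_contra! hne
      exact (Measure.one_le_hausdorffMeasure_zero_of_nonempty hne).not_gt (hS ▸ one_pos)
    exact playerIIWins_of_tsum_lt hD hα hβ hρ₀ one_pos hpack (T := Empty.elim) (j := Empty.elim)
      (by simp [hS_empty]) (fun i => i.elim) (by simp)
  have hm0 : (0 : ℝ) < m := by positivity
  have ht : 0 < Real.log m / Real.log (1 / (α * β)) :=
    div_pos (Real.log_pos (mod_cast hm)) (Real.log_pos (one_lt_one_div hq0 hq1))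
  obtain ⟨T, j, hST, hT, hsum⟩ := exists_geometric_cover_of_hausdorffMeasure_eq_zero ht hS hq0 hq1
    (mul_pos hq0 hρ₀) (ε := 1 / (D : ℝ≥0∞) ^ 3) (by simp)
  rw [ENNReal.ofReal_rpow_of_pos hq0, rpow_log_div_log_one_div hq0 hq1.ne hm0,
    ENNReal.ofReal_inv_of_pos hm0, ENNReal.ofReal_natCast] at hsum
  exact playerIIWins_of_tsum_lt hD hα hβ hρ₀ (zero_lt_one.trans hm) hpack hST hT
    (ENNReal.mul_lt_of_lt_div hsum)

/-- Schmidt's theorem for complete doubling spaces: if every small enough ball inside some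
fixed ball `B̄(x̃,ρ̃)` contains `m` balls shrunk by `β` with pairwise disjoint interiors, and
`dim_H S < log m / log (1/(αβ))`, then Player II has a winning strategy in the
`(α,β)`-Schmidt game with target set `S`. -/
theorem playerII_wins_schmidt_game [CompleteSpace X] (D : ℕ) (hD : IsDoublingWith X D)
    (α β : ℝ) (hα : α ∈ Set.Ioo (0 : ℝ) 1) (hβ : β ∈ Set.Ioo (0 : ℝ) 1) (S : Set X)
    (x₀ : X) (ρ₀ : ℝ) (hρ₀ : 0 < ρ₀) (m : ℕ) (hm : 1 ≤ m)
    (hpack : ∀ ρ ∈ Set.Ioo (0 : ℝ) ρ₀, ∀ y : X, closedBall y ρ ⊆ closedBall x₀ ρ₀ →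
      ∃ z : Fin m → X, (∀ j, closedBall (z j) (β * ρ) ⊆ closedBall y ρ) ∧
        Pairwise fun j j' : Fin m =>
          Disjoint (interior (closedBall (z j) (β * ρ))) (interior (closedBall (z j') (β * ρ))))
    (hS : dimH S < ENNReal.ofReal (Real.log m / Real.log (1 / (α * β)))) :
    ∃ (c : X) (ρinit : ℝ) (σ : List X → X), 0 < ρinit ∧
      (∀ (y : ℕ → X) (n : ℕ), Odd n → AdmUpTo α β c ρinit y n →
        closedBall (σ (List.ofFn fun i : Fin n => y i)) (rho α β ρinit n) ⊆
          closedBall (y (n - 1)) (rho α β ρinit (n - 1))) ∧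
      ∀ y : ℕ → X, (∀ k : ℕ, AdmAt α β c ρinit y k) →
        (∀ n : ℕ, Odd n → y n = σ (List.ofFn fun i : Fin n => y i)) →
        ¬ (⋂ n : ℕ, closedBall (y n) (rho α β ρinit n)) ⊆ S := by
  borelize X
  have ht := ENNReal.ofReal_pos.1 hS.bot_lt
  exact playerII_wins_schmidt_game_general hD hα hβ hρ₀ hm hpack <|
    Real.coe_toNNReal _ ht.le ▸ hausdorffMeasure_of_dimH_lt hS
end
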